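/- arXiv:1706.01573 — 4 statements merged into one kernel-verified Lean document; each statement's English description precedes it below -/
import Mathlib

section
/- Let N and M be the upper triangular infinite matrices defined by N_{00} = M_{00} = 1, N_{0j} = N_{i0} = M_{0j} = M_{i0} = 0 for i, j ≥ 1, N_{ij} = (-1)^{j-i} \binom{⌊(i-1)/2⌋ + j - i}{⌊(i-1)/2⌋} and M_{ij} = \binom{⌊j/2⌋}{j-i} for 1 ≤ i ≤ j, and N_{ij} = M_{ij} = 0 for i > j ≥ 1. Then for all i, j ∈ ℕ, the (finite) sum ∑_{l=i}^{j} ∑_{k=l}^{j} N_{il} \binom{k}{l} (-1)^k M_{kj} equals: 1 if i = j and i is even; -1 if i = j and i is odd; -1 if j = i+1 and i is even; and 0 otherwise. That is, N (PᵀD) M is the infinite direct sum of copies of the 2×2 matrix [[1,-1],[0,-1]]. -/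
/-- The matrix `N` of Lemma 3.1. -/
noncomputable def Nmat (i j : ℕ) : ℝ :=
  if i = 0 ∧ j = 0 then 1
  else if i = 0 ∨ j = 0 then 0
  else if i ≤ j then (-1) ^ (j - i) * (Nat.choose ((i - 1) / 2 + (j - i)) ((i - 1) / 2) : ℝ)
  else 0

/-- The matrix `M` of Lemma 3.2. -/
noncomputable def Mmat (i j : ℕ) : ℝ :=
  if i = 0 ∧ j = 0 then 1
  else if i = 0 ∨ j = 0 then 0
  else if i ≤ j then (Nat.choose (j / 2) (j - i) : ℝ)
  else 0

/-!
Encode the `j`-th column of `M` as the polynomial `c_j = X ^ ⌈j/2⌉ * (1 + X) ^ ⌊j/2⌋`. In this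
encoding `PᵀD` is the substitution `X ↦ -(1 + X)`, which fixes `c_{2h}` and sends `c_{2h+1}` to
`-c_{2h} - c_{2h+1}`. Moreover `N` is a left inverse of `M`: this is the Chu-Vandermonde identity
with one negative upper index. Hence `N (PᵀD) M` has the columns `e_{2h}` and
`-e_{2h} - e_{2h+1}`.
-/

open Finset Polynomial

theorem ringChoose_neg_natCast_add_one {R : Type*} [Ring R] [BinomialRing R] (e k : ℕ) :
    Ring.choose (-(e + 1 : R)) k = (-1) ^ k * ((e + k).choose e : R) := by
  have upper : (e + 1 + k - 1 : R) = ((e + k : ℕ) : R) := by push_cast; abel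
  rw [Ring.choose_neg, upper, Ring.choose_natCast, Nat.choose_symm_add, Units.smul_def,
    zsmul_eq_mul, Int.coe_negOnePow_natCast]
  push_cast
  rfl

theorem sum_antidiagonal_neg_one_pow_mul_choose_mul_choose {R : Type*} [Ring R] (e m n : ℕ) :
    ∑ p ∈ antidiagonal n, (-1 : R) ^ p.1 * ((e + p.1).choose e : R) * ((e + 1 + m).choose p.2 : R)
      = (m.choose n : R) := by
  have vandermonde := Ring.add_choose_eq n (Commute.all (-(e + 1 : ℤ)) ((e + 1 + m : ℕ) : ℤ))
  have upper : -(e + 1 : ℤ) + ((e + 1 + m : ℕ) : ℤ) = m := by push_cast; ring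
  simp only [upper, ringChoose_neg_natCast_add_one, Ring.choose_natCast] at vandermonde
  exact_mod_cast (congrArg (Int.cast : ℤ → R) vandermonde).symm

theorem coeff_comp_neg_one_add_X {R : Type*} [CommRing R] {p : R[X]} {n : ℕ}
    (hp : p.natDegree ≤ n) (l : ℕ) :
    (p.comp (-(1 + X))).coeff l = ∑ k ∈ Icc l n, (k.choose l : R) * (-1) ^ k * p.coeff k := by
  have term (k : ℕ) :
      (C (p.coeff k) * (-(1 + X)) ^ k).coeff l = (k.choose l : R) * (-1) ^ k * p.coeff k := by
    rw [coeff_C_mul, neg_pow, ← C_1, ← C_neg, ← C_pow, coeff_C_mul, C_1, coeff_one_add_X_pow]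
    ring
  rw [comp, eval₂_eq_sum_range' C (Nat.lt_succ_of_le hp), finsetSum_coeff]
  simp only [term]
  refine (sum_subset (fun k hk ↦ by grind) fun k hk hkl ↦ ?_).symm
  rw [Nat.choose_eq_zero_of_lt (by grind), Nat.cast_zero, zero_mul, zero_mul]

theorem Mmat_of_lt {i j : ℕ} (h : j < i) : Mmat i j = 0 := by
  grind [Mmat]

theorem Mmat_of_le {i j : ℕ} (h : i ≤ j) : Mmat i j = ((j / 2).choose (j - i) : ℝ) := by
  rcases Nat.eq_zero_or_pos i with rfl | hi
  · rcases Nat.eq_zero_or_pos j with rfl | hj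
    · simp [Mmat]
    · simp [Mmat, hj.ne', Nat.choose_eq_zero_of_lt (Nat.div_lt_self hj one_lt_two)]
  · simp [Mmat, hi.ne', (hi.trans_le h).ne', h]

theorem Nmat_zero_left (j : ℕ) : Nmat 0 j = if j = 0 then 1 else 0 := by
  simp [Nmat]

theorem Nmat_add_right {i : ℕ} (hi : 0 < i) (d : ℕ) :
    Nmat i (i + d) = (-1) ^ d * (((i - 1) / 2 + d).choose ((i - 1) / 2) : ℝ) := by
  simp [Nmat, hi.ne']

theorem sum_Nmat_mul_Mmat_of_pos_of_lt {i j : ℕ} (hi : 0 < i) (hij : i < j) :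
    ∑ l ∈ Icc i j, Nmat i l * Mmat l j = 0 := by
  obtain ⟨m, hm⟩ : ∃ m, j / 2 = (i - 1) / 2 + 1 + m := Nat.exists_eq_add_of_le (by omega)
  calc ∑ l ∈ Icc i j, Nmat i l * Mmat l j
      = ∑ d ∈ range (j - i + 1), Nmat i (i + d) * Mmat (i + d) j := by
        rw [← Ico_add_one_right_eq_Icc, sum_Ico_eq_sum_range, Nat.sub_add_comm hij.le]
    _ = ∑ d ∈ range (j - i + 1), (-1) ^ d * (((i - 1) / 2 + d).choose ((i - 1) / 2) : ℝ)
          * (((i - 1) / 2 + 1 + m).choose (j - i - d) : ℝ) := by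
        refine sum_congr rfl fun d hd ↦ ?_
        rw [Nmat_add_right hi, Mmat_of_le (by grind), hm, Nat.sub_add_eq]
    _ = (m.choose (j - i) : ℝ) := by
        rw [← sum_antidiagonal_neg_one_pow_mul_choose_mul_choose ((i - 1) / 2),
          Nat.sum_antidiagonal_eq_sum_range_succ_mk]
    _ = 0 := by rw [Nat.choose_eq_zero_of_lt (by omega), Nat.cast_zero]

theorem sum_Nmat_mul_Mmat_self_right (i j : ℕ) :
    ∑ l ∈ Icc i j, Nmat i l * Mmat l j = if i = j then 1 else 0 := by
  rcases lt_trichotomy i j with hij | rfl | hji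
  · rw [if_neg hij.ne]
    rcases Nat.eq_zero_or_pos i with rfl | hi
    · exact sum_eq_zero fun l _ ↦ by grind [Nmat_zero_left, Mmat]
    · exact sum_Nmat_mul_Mmat_of_pos_of_lt hi hij
  · rcases Nat.eq_zero_or_pos i with rfl | hi
    · simp [Nmat, Mmat]
    · simpa [Mmat_of_le] using Nmat_add_right hi 0
  · simp [hji, hji.ne']

theorem sum_Nmat_mul_Mmat (i : ℕ) {j n : ℕ} (hjn : j ≤ n) :
    ∑ l ∈ Icc i n, Nmat i l * Mmat l j = if i = j then 1 else 0 := by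
  rw [← sum_Nmat_mul_Mmat_self_right]
  refine (sum_subset (Icc_subset_Icc_right hjn) fun l hl hlj ↦ ?_).symm
  rw [Mmat_of_lt (by grind), mul_zero]

/-- The generating polynomial `∑ k, Mmat k j * X ^ k` of the `j`-th column of `M`, given in its
factored form; the exponent `j - j / 2` is `⌈j / 2⌉`. -/
noncomputable def columnPoly (j : ℕ) : ℝ[X] :=
  X ^ (j - j / 2) * (1 + X) ^ (j / 2)

theorem coeff_columnPoly (j k : ℕ) : (columnPoly j).coeff k = Mmat k j := by
  rw [columnPoly, coeff_X_pow_mul', coeff_one_add_X_pow]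
  rcases lt_or_ge j k with hjk | hkj
  · rw [Mmat_of_lt hjk, if_pos (by omega), Nat.choose_eq_zero_of_lt (by omega), Nat.cast_zero]
  rw [Mmat_of_le hkj]
  split_ifs with h
  · rw [← Nat.choose_symm (by omega)]
    congr 2
    omega
  · rw [Nat.choose_eq_zero_of_lt (by omega), Nat.cast_zero]

theorem natDegree_columnPoly_le (j : ℕ) : (columnPoly j).natDegree ≤ j :=
  natDegree_le_iff_coeff_eq_zero.mpr fun k hk ↦ by rw [coeff_columnPoly, Mmat_of_lt hk]

theorem columnPoly_two_mul (h : ℕ) : columnPoly (2 * h) = X ^ h * (1 + X) ^ h := by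
  rw [columnPoly, show 2 * h / 2 = h by omega, show 2 * h - h = h by omega]

theorem columnPoly_two_mul_add_one (h : ℕ) :
    columnPoly (2 * h + 1) = X * columnPoly (2 * h) := by
  rw [columnPoly_two_mul, columnPoly, show (2 * h + 1) / 2 = h by omega,
    show 2 * h + 1 - h = h + 1 by omega, pow_succ', mul_assoc]

theorem columnPoly_two_mul_comp (h : ℕ) :
    (columnPoly (2 * h)).comp (-(1 + X)) = columnPoly (2 * h) := by
  simp only [columnPoly_two_mul, ← mul_pow, pow_comp, mul_comp, add_comp, one_comp, X_comp]
  ring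

theorem columnPoly_two_mul_add_one_comp (h : ℕ) :
    (columnPoly (2 * h + 1)).comp (-(1 + X))
      = -columnPoly (2 * h) - columnPoly (2 * h + 1) := by
  rw [columnPoly_two_mul_add_one, mul_comp, X_comp, columnPoly_two_mul_comp]
  ring

theorem sum_choose_mul_Mmat (l j : ℕ) :
    ∑ k ∈ Icc l j, (k.choose l : ℝ) * (-1) ^ k * Mmat k j
      = ((columnPoly j).comp (-(1 + X))).coeff l := by
  simp only [coeff_comp_neg_one_add_X (natDegree_columnPoly_le j), coeff_columnPoly]

theorem sum_choose_mul_Mmat_two_mul (l h : ℕ) :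
    ∑ k ∈ Icc l (2 * h), (k.choose l : ℝ) * (-1) ^ k * Mmat k (2 * h) = Mmat l (2 * h) := by
  rw [sum_choose_mul_Mmat, columnPoly_two_mul_comp, coeff_columnPoly]

theorem sum_choose_mul_Mmat_two_mul_add_one (l h : ℕ) :
    ∑ k ∈ Icc l (2 * h + 1), (k.choose l : ℝ) * (-1) ^ k * Mmat k (2 * h + 1)
      = -Mmat l (2 * h) - Mmat l (2 * h + 1) := by
  rw [sum_choose_mul_Mmat, columnPoly_two_mul_add_one_comp, coeff_sub, coeff_neg,
    coeff_columnPoly, coeff_columnPoly]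

/-- `N (Pᵀ D) M` is the infinite direct sum of copies of `[[1,-1],[0,-1]]`. -/
theorem stmt4 (i j : ℕ) :
    (∑ l ∈ Finset.Icc i j, ∑ k ∈ Finset.Icc l j,
        Nmat i l * ((Nat.choose k l : ℝ) * (-1) ^ k) * Mmat k j)
      = if i = j then (if Even i then 1 else -1)
        else if j = i + 1 ∧ Even i then -1 else 0 := by
  simp only [mul_assoc (Nmat i _), ← mul_sum]
  rcases Nat.even_or_odd' j with ⟨h, rfl | rfl⟩
  · simp only [sum_choose_mul_Mmat_two_mul, sum_Nmat_mul_Mmat i le_rfl]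
    grind
  · simp only [sum_choose_mul_Mmat_two_mul_add_one, mul_sub, mul_neg, sum_sub_distrib,
      sum_neg_distrib, sum_Nmat_mul_Mmat i le_rfl, sum_Nmat_mul_Mmat i (Nat.le_succ _)]
    grind
end

section
/- Let y : ℕ → ℝ be a finitely supported sequence. Then ∑_{k=n}^∞ \binom{k}{n}(-1)^k y_k = -y_n holds for every n if and only if there exists a finitely supported sequence b : ℕ → ℝ such that y_n = ∑_{j} b_j \left( \binom{j+1}{n-j} + \binom{j}{n-j-1} \right) for every n (the inner sum is finite). In other words, the finitely supported inverse invariant sequences of the second kind are exactly the finite linear combinations of the columns of Q^{T↓}(0|0), whose j-th column has entries \binom{j+1}{n-j} + \binom{j}{n-j-1}. -/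
/-!
Encode `y` by the polynomial `Y = ∑ yₖ Xᵏ`. The alternating binomial sums are the coefficients of
`Y (-1 - X)`, so the condition on `y` says that `Y` is odd under the reflection `X ↦ -1 - X`.
This reflection fixes `X * (X + 1)`, hence it commutes with division by `X * (X + 1)`: the quotient
of an odd polynomial is again odd, and the remainder, being odd and of degree at most one, is a
multiple of `1 + 2 * X`. Iterating the division gives `Y = (1 + 2 * X) * B (X * (X + 1))`, and
`(1 + 2 * X) * (X * (X + 1)) ^ j = X ^ j * (X + 1) ^ (j + 1) + X ^ (j + 1) * (X + 1) ^ j`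
is the generating polynomial of the `j`-th column.
-/

section

open Polynomial

section Semiring

variable {R : Type*} [Semiring R]

theorem finite_support_iff_exists_coeff_eq {f : ℕ → R} :
    (Function.support f).Finite ↔ ∃ P : R[X], P.coeff = f := by
  constructor
  · intro hf
    refine ⟨∑ i ∈ hf.toFinset, monomial i (f i), funext fun n => ?_⟩
    simp +contextual [finsetSum_coeff, coeff_monomial, eq_comm]
  · rintro ⟨P, rfl⟩
    exact P.support.finite_toSet.subset fun k hk => by simpa using hk

theorem exists_finite_support_and_iff {p : (ℕ → R) → Prop} :
    (∃ b : ℕ → R, (Function.support b).Finite ∧ p b) ↔ ∃ B : R[X], p B.coeff := by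
  simp [finite_support_iff_exists_coeff_eq]

theorem degree_comp_le_of_natDegree_le_one {s : R[X]} (hs : s.natDegree ≤ 1) (p : R[X]) :
    (p.comp s).degree ≤ p.degree := by
  rcases eq_or_ne p 0 with rfl | hp
  · rw [zero_comp]
  · rw [degree_eq_natDegree hp]
    exact degree_le_of_natDegree_le (natDegree_comp_le.trans (mul_le_of_le_one_right' hs))

theorem monic_X_mul_X_add_one : (X * (X + 1) : R[X]).Monic :=
  monic_X.mul (monic_X_add_C 1)

theorem natDegree_X_mul_X_add_one [Nontrivial R] : (X * (X + 1) : R[X]).natDegree = 2 := by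
  have natDegree_X_add_one : (X + 1 : R[X]).natDegree = 1 := natDegree_X_add_C 1
  have X_add_one_ne_zero : (X + 1 : R[X]) ≠ 0 := X_add_C_ne_zero 1
  rw [natDegree_X_mul X_add_one_ne_zero, natDegree_X_add_one]

end Semiring

section Ring

variable {R : Type*} [Ring R]

theorem neg_divByMonic (p q : R[X]) : -p /ₘ q = -(p /ₘ q) := by
  nontriviality R
  by_cases hq : q.Monic
  · refine (div_modByMonic_unique (-(p /ₘ q)) (-(p %ₘ q)) hq ⟨?_, ?_⟩).1
    · rw [mul_neg, ← neg_add, modByMonic_add_div]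
    · rw [degree_neg]
      exact degree_modByMonic_lt p hq
  · rw [divByMonic_eq_of_not_monic _ hq, divByMonic_eq_of_not_monic _ hq, neg_zero]

end Ring

section CommSemiring

variable {R : Type*} [CommSemiring R]

theorem coeff_mul_comp_of_X_dvd {p : R[X]} (hp : X ∣ p) (q B : R[X]) (n : ℕ) :
    (q * B.comp p).coeff n = ∑ j ∈ Finset.range (n + 1), B.coeff j * (q * p ^ j).coeff n := by
  induction B using Polynomial.induction_on' with
  | add B₁ B₂ h₁ h₂ =>
    simp only [add_comp, mul_add, coeff_add, h₁, h₂, add_mul, Finset.sum_add_distrib]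
  | monomial m a =>
    have coeff_eq_zero (hm : n < m) : (q * p ^ m).coeff n = 0 :=
      X_pow_dvd_iff.mp ((pow_dvd_pow_of_dvd hp m).mul_left q) n hm
    rw [monomial_comp, mul_left_comm, coeff_C_mul]
    simp only [coeff_monomial, ite_mul, zero_mul, Finset.sum_ite_eq, Finset.mem_range]
    split_ifs with hm
    · rfl
    · rw [coeff_eq_zero (by omega), mul_zero]

theorem coeff_one_add_two_mul_X_mul_pow {j n : ℕ} (hjn : j ≤ n) :
    ((1 + 2 * X) * (X * (X + 1)) ^ j : R[X]).coeff n =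
      (Nat.choose (j + 1) (n - j) : R) +
        (if j + 1 ≤ n then (Nat.choose j (n - j - 1) : R) else 0) := by
  have column_eq : ((1 + 2 * X) * (X * (X + 1)) ^ j : R[X]) =
      X ^ j * (X + 1) ^ (j + 1) + X ^ (j + 1) * (X + 1) ^ j := by
    rw [mul_pow]
    ring
  simp only [column_eq, coeff_add, coeff_X_pow_mul', coeff_X_add_one_pow, if_pos hjn, Nat.sub_sub]

theorem coeff_one_add_two_mul_X_mul_comp (B : R[X]) (n : ℕ) :
    ((1 + 2 * X) * B.comp (X * (X + 1))).coeff n = ∑ j ∈ Finset.range (n + 1),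
      B.coeff j * ((Nat.choose (j + 1) (n - j) : R) +
        (if j + 1 ≤ n then (Nat.choose j (n - j - 1) : R) else 0)) := by
  rw [coeff_mul_comp_of_X_dvd (dvd_mul_right X (X + 1))]
  refine Finset.sum_congr rfl fun j hj => ?_
  rw [coeff_one_add_two_mul_X_mul_pow (Finset.mem_range_succ_iff.mp hj)]

end CommSemiring

section CommRing

variable {R : Type*} [CommRing R]

theorem coeff_comp_neg_one_sub_X (Y : R[X]) (n : ℕ) :
    (Y.comp (-1 - X)).coeff n = ∑ᶠ k, (Nat.choose k n : R) * (-1) ^ k * Y.coeff k := by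
  have coeff_pow (k : ℕ) : ((-1 - X : R[X]) ^ k).coeff n = (-1) ^ k * (Nat.choose k n : R) := by
    have pow_eq : (-1 - X : R[X]) ^ k = C ((-1) ^ k) * (X + 1) ^ k := by
      rw [← neg_add', neg_pow, add_comm 1 X, C_pow, C_neg, C_1]
    rw [pow_eq, coeff_C_mul, coeff_X_add_one_pow]
  have support_subset : (Function.support fun k => (Nat.choose k n : R) * (-1) ^ k * Y.coeff k) ⊆
      Y.support := fun k hk => by
    simpa using right_ne_zero_of_mul hk
  rw [finsum_eq_sum_of_support_subset _ support_subset, comp_eq_sum_left, Polynomial.sum,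
    finsetSum_coeff]
  refine Finset.sum_congr rfl fun k _ => ?_
  rw [coeff_C_mul, coeff_pow]
  ring

theorem div_modByMonic_comp_of_comp_eq {t s : R[X]} (ht : t.Monic) (hts : t.comp s = t)
    (hs : s.natDegree ≤ 1) (Y : R[X]) :
    Y.comp s /ₘ t = (Y /ₘ t).comp s ∧ Y.comp s %ₘ t = (Y %ₘ t).comp s := by
  nontriviality R
  refine div_modByMonic_unique _ _ ht
    ⟨?_, (degree_comp_le_of_natDegree_le_one hs _).trans_lt (degree_modByMonic_lt Y ht)⟩
  calc (Y %ₘ t).comp s + t * (Y /ₘ t).comp s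
      = (Y %ₘ t + t * (Y /ₘ t)).comp s := by rw [add_comp, mul_comp, hts]
    _ = Y.comp s := by rw [modByMonic_add_div]

theorem X_mul_X_add_one_comp_neg_one_sub_X :
    (X * (X + 1) : R[X]).comp (-1 - X) = X * (X + 1) := by
  simp only [mul_comp, add_comp, X_comp, one_comp]
  ring

theorem one_add_two_mul_X_comp_neg_one_sub_X :
    (1 + 2 * X : R[X]).comp (-1 - X) = -(1 + 2 * X) := by
  simp only [add_comp, mul_comp, one_comp, ofNat_comp, X_comp]
  ring

theorem exists_eq_C_mul_of_comp_neg_one_sub_X_eq_neg {r : R[X]} (hdeg : r.natDegree ≤ 1)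
    (hr : r.comp (-1 - X) = -r) : ∃ c : R, r = C c * (1 + 2 * X) := by
  obtain ⟨a, c, rfl⟩ := exists_eq_X_add_C_of_natDegree_le_one hdeg
  have eval_zero : -a + c = -c := by simpa using congrArg (eval 0) hr
  have slope_eq : a = 2 * c := by linear_combination -eval_zero
  refine ⟨c, ?_⟩
  rw [slope_eq, C_mul, C_ofNat]
  ring

theorem div_modByMonic_of_comp_neg_one_sub_X_eq_neg {Y : R[X]} (hY : Y.comp (-1 - X) = -Y) :
    (Y /ₘ (X * (X + 1))).comp (-1 - X) = -(Y /ₘ (X * (X + 1))) ∧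
      ∃ c : R, Y %ₘ (X * (X + 1)) = C c * (1 + 2 * X) := by
  nontriviality R
  have reflection_natDegree : (-1 - X : R[X]).natDegree ≤ 1 := by compute_degree
  have mod_natDegree : (Y %ₘ (X * (X + 1))).natDegree ≤ 1 := by
    have ne_one : (X * (X + 1) : R[X]) ≠ 1 :=
      ne_of_apply_ne natDegree (by simp [natDegree_X_mul_X_add_one])
    have mod_lt := natDegree_modByMonic_lt Y monic_X_mul_X_add_one ne_one
    rw [natDegree_X_mul_X_add_one] at mod_lt
    exact Nat.le_of_lt_succ mod_lt
  obtain ⟨div_comp, mod_comp⟩ := div_modByMonic_comp_of_comp_eq monic_X_mul_X_add_one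
    X_mul_X_add_one_comp_neg_one_sub_X reflection_natDegree Y
  rw [hY, neg_divByMonic] at div_comp
  rw [hY, neg_modByMonic] at mod_comp
  exact ⟨div_comp.symm, exists_eq_C_mul_of_comp_neg_one_sub_X_eq_neg mod_natDegree mod_comp.symm⟩

theorem exists_eq_mul_comp_of_comp_neg_one_sub_X_eq_neg (Y : R[X]) (hY : Y.comp (-1 - X) = -Y) :
    ∃ B : R[X], Y = (1 + 2 * X) * B.comp (X * (X + 1)) := by
  nontriviality R
  induction Y using degree_lt_wf.induction with
  | _ Y ih =>
  rcases eq_or_ne Y 0 with rfl | hY0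
  · exact ⟨0, by rw [zero_comp, mul_zero]⟩
  obtain ⟨quotient_odd, c, remainder_eq⟩ := div_modByMonic_of_comp_neg_one_sub_X_eq_neg hY
  have quotient_degree_lt : (Y /ₘ (X * (X + 1))).degree < Y.degree :=
    degree_divByMonic_lt Y _ hY0
      (natDegree_pos_iff_degree_pos.mp (by rw [natDegree_X_mul_X_add_one]; exact two_pos))
  obtain ⟨B, quotient_eq⟩ := ih _ quotient_degree_lt quotient_odd
  have division := modByMonic_add_div Y (X * (X + 1))
  rw [remainder_eq, quotient_eq] at division
  refine ⟨C c + X * B, ?_⟩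
  rw [add_comp, C_comp, mul_comp, X_comp]
  linear_combination -division

theorem comp_neg_one_sub_X_eq_neg_iff {Y : R[X]} :
    Y.comp (-1 - X) = -Y ↔ ∃ B : R[X], Y = (1 + 2 * X) * B.comp (X * (X + 1)) := by
  refine ⟨exists_eq_mul_comp_of_comp_neg_one_sub_X_eq_neg Y, ?_⟩
  rintro ⟨B, rfl⟩
  rw [mul_comp, comp_assoc, X_mul_X_add_one_comp_neg_one_sub_X,
    one_add_two_mul_X_comp_neg_one_sub_X, neg_mul]

theorem stmt7_general (y : ℕ → R) (hy : (Function.support y).Finite) :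
    (∀ n, ∑ᶠ k, (Nat.choose k n : R) * (-1) ^ k * y k = -y n) ↔
    (∃ b : ℕ → R, (Function.support b).Finite ∧
      ∀ n, y n = ∑ j ∈ Finset.range (n + 1),
        b j * ((Nat.choose (j + 1) (n - j) : R) +
          (if j + 1 ≤ n then (Nat.choose j (n - j - 1) : R) else 0))) := by
  obtain ⟨Y, rfl⟩ := finite_support_iff_exists_coeff_eq.mp hy
  simp only [exists_finite_support_and_iff, ← coeff_comp_neg_one_sub_X,
    ← coeff_one_add_two_mul_X_mul_comp, ← coeff_neg, ← Polynomial.ext_iff]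
  exact comp_neg_one_sub_X_eq_neg_iff

end CommRing

end

/-- the finitely supported inverse invariant sequences of the second
kind are exactly the finite linear combinations of the columns of `Q^{T↓}(0|0)`,
whose `j`-th column has entries `choose (j+1) (n-j) + choose j (n-j-1)`
(the second binomial being `0` when `n - j - 1 < 0`, i.e. when `j + 1 > n`). -/
theorem stmt7 (y : ℕ → ℝ) (hy : (Function.support y).Finite) :
    (∀ n, ∑ᶠ k, (Nat.choose k n : ℝ) * (-1) ^ k * y k = -y n) ↔
    (∃ b : ℕ → ℝ, (Function.support b).Finite ∧
      ∀ n, y n = ∑ j ∈ Finset.range (n + 1),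
        b j * ((Nat.choose (j + 1) (n - j) : ℝ) +
          (if j + 1 ≤ n then (Nat.choose j (n - j - 1) : ℝ) else 0))) :=
  stmt7_general y hy
end

section
/- Let x : ℕ → ℝ. Then ∑_{k=0}^{n} \binom{n}{k}(-1)^k x_k = -x_n holds for every n if and only if there exists a sequence c : ℕ → ℝ such that for every n, x_n = ∑_{j=0}^{⌊(n-1)/2⌋} c_j \binom{n-j-1}{j} (a finite sum; for n = 0 the empty sum, so x_0 = 0). In other words, the inverse invariant sequences of the first kind are exactly the (entrywise well-defined) linear combinations of the columns of the matrix [0ᵀ; P↓], whose j-th column has entries \binom{n-j-1}{j}. -/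
/-!
Let `T x n = x (n + 2) - x (n + 1)`. Pascal's rule gives the binomial transform `B` the recurrence
`B x (n + 2) = B x (n + 1) + B (T x) n`, which is the rule `x (n + 2) = x (n + 1) + T x n` with `B`
applied to each sequence. Hence `T` preserves the solutions of `B x = -x`. On the combination of
the columns with coefficients `c`, Pascal's rule shows that `T` shifts `c` by one place. So column
combinations are invariant by two-step induction. Conversely, every iterate of `T` on an invariant
sequence is invariant, so it vanishes at `0`; it is then determined by its value at `1` and its
image under `T`, and the value of the `j`-th iterate at `1` is the coefficient of the `j`-th column.
-/

section

open Finset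

variable {M : Type*} [AddCommGroup M]

/-- The binomial transform `n ↦ ∑ k, (n choose k) (-1) ^ k x k` of a sequence in an abelian
group. -/
def binomialTransform (x : ℕ → M) (n : ℕ) : M :=
  ∑ k ∈ range (n + 1), n.choose k • (-1 : ℤ) ^ k • x k

/-- The inverse invariant sequences of the first kind: those which the binomial transform
negates. -/
def IsInverseInvariant (x : ℕ → M) : Prop :=
  ∀ n, binomialTransform x n = -x n

/-- The forward difference of a sequence, with its initial term dropped. This is the operator that
shifts the coefficients of a column combination. -/
def shiftedDiff (x : ℕ → M) (n : ℕ) : M :=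
  x (n + 2) - x (n + 1)

/-- The combination, with coefficients `c`, of the columns of `[0ᵀ; P↓]`. The sum stops at
`⌊(n - 1) / 2⌋`, beyond which the `n`-th entries of the columns vanish; stopping there also excludes
the junk value `(0 - 0 - 1).choose 0 = 1` at `n = 0`. -/
def columnCombination (c : ℕ → M) (n : ℕ) : M :=
  ∑ j ∈ range ((n + 1) / 2), (n - j - 1).choose j • c j

theorem binomialTransform_sub (x y : ℕ → M) (n : ℕ) :
    binomialTransform (x - y) n = binomialTransform x n - binomialTransform y n := by
  simp only [binomialTransform, Pi.sub_apply, smul_sub, sum_sub_distrib]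

theorem binomialTransform_succ (x : ℕ → M) (n : ℕ) :
    binomialTransform x (n + 1) =
      binomialTransform x n - binomialTransform (fun k => x (k + 1)) n := by
  simp only [binomialTransform, sum_choose_succ_nsmul (fun k _ => (-1 : ℤ) ^ k • x k) n,
    pow_succ, mul_neg_one, neg_smul, smul_neg, sum_neg_distrib]
  abel

theorem binomialTransform_add_two (x : ℕ → M) (n : ℕ) :
    binomialTransform x (n + 2) =
      binomialTransform x (n + 1) + binomialTransform (shiftedDiff x) n := by
  have transform_diff : binomialTransform (shiftedDiff x) n =
      binomialTransform (fun k => x (k + 2)) n - binomialTransform (fun k => x (k + 1)) n :=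
    binomialTransform_sub _ _ n
  rw [binomialTransform_succ x (n + 1), binomialTransform_succ (fun k => x (k + 1)) n,
    transform_diff]
  abel

theorem columnCombination_eq_sum_range (c : ℕ → M) (n : ℕ) :
    columnCombination c n = ∑ j ∈ range n, (n - j - 1).choose j • c j := by
  refine sum_subset (range_subset_range.2 (by omega)) fun j hj hj' => ?_
  rw [mem_range] at hj hj'
  rw [Nat.choose_eq_zero_of_lt (by omega), zero_smul]

theorem columnCombination_add_two (c : ℕ → M) (n : ℕ) :
    columnCombination c (n + 2) =
      columnCombination c (n + 1) + columnCombination (fun j => c (j + 1)) n := by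
  have pascal : ∀ j ∈ range n, (n + 2 - (j + 1) - 1).choose (j + 1) • c (j + 1) =
      (n + 1 - (j + 1) - 1).choose (j + 1) • c (j + 1) + (n - j - 1).choose j • c (j + 1) := by
    intro j hj
    rw [mem_range] at hj
    rw [show n + 2 - (j + 1) - 1 = n - j - 1 + 1 by omega,
      show n + 1 - (j + 1) - 1 = n - j - 1 by omega, Nat.choose_succ_succ', add_comm, add_smul]
  have last_eq_zero : (n + 2 - (n + 1) - 1).choose (n + 1) • c (n + 1) = 0 := by
    rw [Nat.choose_eq_zero_of_lt (by omega), zero_smul]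
  simp only [columnCombination_eq_sum_range]
  rw [sum_range_succ' _ (n + 1), sum_range_succ _ n, last_eq_zero, sum_congr rfl pascal,
    sum_add_distrib, sum_range_succ' _ n]
  simp only [Nat.choose_zero_right]
  abel

theorem shiftedDiff_columnCombination (c : ℕ → M) :
    shiftedDiff (columnCombination c) = columnCombination fun j => c (j + 1) :=
  funext fun n => sub_eq_of_eq_add' (columnCombination_add_two c n)

theorem isInverseInvariant_columnCombination (c : ℕ → M) :
    IsInverseInvariant (columnCombination c) := by
  intro n
  induction n using Nat.twoStepInduction generalizing c with
  | zero => simp [binomialTransform, columnCombination]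
  | one => simp [binomialTransform, columnCombination, sum_range_succ]
  | more n ih₀ ih₁ =>
    rw [binomialTransform_add_two, shiftedDiff_columnCombination, ih₁, ih₀,
      columnCombination_add_two, neg_add]

theorem eq_columnCombination_of_iterate_shiftedDiff_zero {x : ℕ → M}
    (hx : ∀ j, shiftedDiff^[j] x 0 = 0) :
    x = columnCombination fun j => shiftedDiff^[j] x 1 := by
  funext n
  induction n using Nat.twoStepInduction generalizing x with
  | zero => simpa [columnCombination] using hx 0
  | one => simp [columnCombination]
  | more n ih₀ ih₁ =>
    have diff_eq : shiftedDiff x n = columnCombination (fun j => shiftedDiff^[j + 1] x 1) n :=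
      ih₀ fun j => hx (j + 1)
    rw [columnCombination_add_two, ← ih₁ hx, ← diff_eq, shiftedDiff, add_sub_cancel]

protected theorem IsInverseInvariant.shiftedDiff {x : ℕ → M} (hx : IsInverseInvariant x) :
    IsInverseInvariant (shiftedDiff x) := by
  intro n
  have recurrence := binomialTransform_add_two x n
  rw [hx, hx] at recurrence
  rw [← sub_eq_of_eq_add' recurrence, shiftedDiff]
  abel

theorem IsInverseInvariant.apply_zero {x : ℕ → M} (hx : IsInverseInvariant x)
    (two_regular : IsSMulRegular M (2 : ℕ)) : x 0 = 0 := by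
  have self_eq_neg : x 0 = -x 0 := by simpa [binomialTransform] using hx 0
  exact two_regular.right_eq_zero_of_smul
    ((two_nsmul _).trans (eq_neg_iff_add_eq_zero.1 self_eq_neg))

theorem IsInverseInvariant.eq_columnCombination {x : ℕ → M} (hx : IsInverseInvariant x)
    (two_regular : IsSMulRegular M (2 : ℕ)) :
    x = columnCombination fun j => shiftedDiff^[j] x 1 := by
  have iterate_invariant : ∀ j, IsInverseInvariant (shiftedDiff^[j] x) :=
    Function.Iterate.rec IsInverseInvariant hx fun _ => IsInverseInvariant.shiftedDiff
  exact eq_columnCombination_of_iterate_shiftedDiff_zero fun j =>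
    (iterate_invariant j).apply_zero two_regular

theorem stmt8_general (two_regular : IsSMulRegular M (2 : ℕ)) (x : ℕ → M) :
    (∀ n, ∑ k ∈ range (n + 1), n.choose k • (-1 : ℤ) ^ k • x k = -x n) ↔
    (∃ c : ℕ → M, ∀ n, x n =
      ∑ j ∈ range ((n + 1) / 2), (n - j - 1).choose j • c j) := by
  constructor
  · intro (hx : IsInverseInvariant x)
    exact ⟨_, congrFun (hx.eq_columnCombination two_regular)⟩
  · rintro ⟨c, hc⟩
    obtain rfl : x = columnCombination c := funext hc
    exact isInverseInvariant_columnCombination c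

end

/-- the inverse invariant sequences of the first kind are exactly the
linear combinations of the columns of `[0ᵀ; P↓]`, whose `j`-th column has entries
`choose (n - j - 1) j`; the sum runs over `0 ≤ j ≤ ⌊(n-1)/2⌋`, i.e. `j < (n+1)/2`. -/
theorem stmt8 (x : ℕ → ℝ) :
    (∀ n, ∑ k ∈ Finset.range (n + 1), (Nat.choose n k : ℝ) * (-1) ^ k * x k = -x n) ↔
    (∃ c : ℕ → ℝ, ∀ n, x n =
      ∑ j ∈ Finset.range ((n + 1) / 2), c j * (Nat.choose (n - j - 1) j : ℝ)) := by
  simpa [mul_assoc, mul_comm, mul_left_comm] using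
    stmt8_general (M := ℝ) (smul_right_injective ℝ two_ne_zero) x
end

section
/- Let B_k denote the Bernoulli numbers (with convention B_1 = -1/2). Define K : ℕ → ℝ by K_0 = 0 and K_n = ∑_{k=0}^{n-1} (1/2)^{n-k} (-1)^k B_k for n ≥ 1. Then ∑_{k=0}^{n} \binom{n}{k}(-1)^k K_k = -K_n for every n, i.e., K is an inverse invariant sequence of the first kind. -/
/-!
The sequence `b k = (-1) ^ k * B k` is fixed by the involution
`T a n = ∑ k ≤ n, n.choose k * (-1) ^ k * a k`, because the Bernoulli polynomial `B_n(x)` takes the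
value `(-1) ^ n * B n` at `x = 1`. The sequence `K` solves `2 * K (n + 1) = K n + b n`. Pascal's
rule reads `T K (n + 1) = T K n - T (fun k ↦ K (k + 1)) n`, so applying `T` to the recurrence gives
`2 * T K (n + 1) = T K n - b n`. Hence `T K + K` is halved at each step, and it vanishes at `0`.
-/

open Finset

section Ring

variable {R : Type*} [Ring R]

/-- The alternating binomial transform `n ↦ ∑ k ≤ n, (n choose k) (-1)^k a_k` of a sequence `a`,
whose eigensequences are the (inverse) invariant sequences. -/
def altBinomialTransform (a : ℕ → R) (n : ℕ) : R :=
  ∑ k ∈ range (n + 1), (n.choose k : R) * (-1) ^ k * a k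

/-- Invariant sequences of the first kind: the fixed points of the alternating binomial
transform. -/
def IsInvariantSeq (a : ℕ → R) : Prop :=
  ∀ n, altBinomialTransform a n = a n

/-- Inverse invariant sequences of the first kind: the sequences that the alternating binomial
transform negates. -/
def IsInverseInvariantSeq (a : ℕ → R) : Prop :=
  ∀ n, altBinomialTransform a n = -a n

@[simp]
theorem altBinomialTransform_zero (a : ℕ → R) : altBinomialTransform a 0 = a 0 := by
  simp [altBinomialTransform]

theorem altBinomialTransform_add (a b : ℕ → R) (n : ℕ) :
    altBinomialTransform (a + b) n = altBinomialTransform a n + altBinomialTransform b n := by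
  simp only [altBinomialTransform, Pi.add_apply, mul_add, sum_add_distrib]

theorem altBinomialTransform_succ (a : ℕ → R) (n : ℕ) :
    altBinomialTransform a (n + 1) =
      altBinomialTransform a n - altBinomialTransform (fun k ↦ a (k + 1)) n := by
  have pascal := sum_choose_succ_mul (fun k _ ↦ (-1 : R) ^ k * a k) n
  simp only [← mul_assoc] at pascal
  simp only [altBinomialTransform, pascal, pow_succ, mul_neg, mul_one, neg_mul, sum_neg_distrib]
  abel

theorem IsInvariantSeq.isInverseInvariantSeq_of_two_mul_succ {a b : ℕ → R}
    (hb : IsInvariantSeq b) (two_regular : IsLeftRegular (2 : R)) (ha0 : a 0 = 0)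
    (ha : ∀ n, 2 * a (n + 1) = a n + b n) : IsInverseInvariantSeq a := by
  have two_mul_transform_shift (n : ℕ) :
      2 * altBinomialTransform (fun k ↦ a (k + 1)) n = altBinomialTransform a n + b n := by
    have shift_add_shift : (fun k ↦ a (k + 1)) + (fun k ↦ a (k + 1)) = a + b := by
      ext k
      simp only [Pi.add_apply, ← two_mul, ha]
    rw [two_mul, ← altBinomialTransform_add, shift_add_shift, altBinomialTransform_add, hb]
  intro n
  induction n with
  | zero => simp [ha0]
  | succ n ih =>
    apply two_regular
    change 2 * altBinomialTransform a (n + 1) = 2 * -a (n + 1)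
    calc 2 * altBinomialTransform a (n + 1)
        = 2 * altBinomialTransform a n - (altBinomialTransform a n + b n) := by
          rw [altBinomialTransform_succ, mul_sub, two_mul_transform_shift]
      _ = -(a n + b n) := by rw [ih]; noncomm_ring
      _ = 2 * -a (n + 1) := by rw [← ha, mul_neg]

end Ring

section DivisionRing

variable {F : Type*} [DivisionRing F]

theorem two_mul_sum_one_half_pow_mul_succ [NeZero (2 : F)] (b : ℕ → F) (n : ℕ) :
    2 * ∑ k ∈ range (n + 1), (1 / 2 : F) ^ (n + 1 - k) * b k =
      ∑ k ∈ range n, (1 / 2 : F) ^ (n - k) * b k + b n := by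
  have two_mul_half_pow (m : ℕ) : 2 * (1 / 2 : F) ^ (m + 1) = (1 / 2) ^ m := by
    rw [pow_succ', ← mul_assoc, mul_one_div_cancel two_ne_zero, one_mul]
  have two_mul_term (k : ℕ) (hk : k ≤ n) :
      2 * ((1 / 2 : F) ^ (n + 1 - k) * b k) = (1 / 2) ^ (n - k) * b k := by
    rw [← mul_assoc, Nat.sub_add_comm hk, two_mul_half_pow]
  rw [mul_sum, sum_congr rfl fun k hk ↦ two_mul_term k (mem_range_succ_iff.mp hk),
    sum_range_succ, Nat.sub_self, pow_zero, one_mul]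

theorem sum_choose_mul_bernoulli (n : ℕ) :
    ∑ k ∈ range (n + 1), (n.choose k : ℚ) * bernoulli k = (-1) ^ n * bernoulli n := by
  rw [← bernoulli'_eq_bernoulli, ← Polynomial.bernoulli_eval_one, Polynomial.bernoulli,
    Polynomial.eval_finsetSum]
  simp only [Polynomial.eval_monomial, one_pow, mul_one, mul_comm]

theorem isInvariantSeq_neg_one_pow_mul_bernoulli [CharZero F] :
    IsInvariantSeq fun k ↦ (-1 : F) ^ k * (bernoulli k : F) := by
  intro n
  have cancel_signs (k : ℕ) : (n.choose k : F) * (-1) ^ k * ((-1) ^ k * (bernoulli k : F)) =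
      (n.choose k : F) * (bernoulli k : F) := by
    rw [mul_assoc, ← mul_assoc ((-1) ^ k), ← pow_add, (Even.add_self k).neg_one_pow,
      one_mul]
  simp only [altBinomialTransform, cancel_signs]
  exact_mod_cast congrArg (Rat.cast : ℚ → F) (sum_choose_mul_bernoulli n)

theorem stmt14_general [NeZero (2 : F)] {b K : ℕ → F} (hb : IsInvariantSeq b) (hK0 : K 0 = 0)
    (hK : ∀ n, 1 ≤ n → K n = ∑ k ∈ range n, (1 / 2 : F) ^ (n - k) * b k) :
    IsInverseInvariantSeq K := by
  have hK' (n : ℕ) : K n = ∑ k ∈ range n, (1 / 2 : F) ^ (n - k) * b k := by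
    rcases n.eq_zero_or_pos with rfl | hn
    · rw [hK0, range_zero, sum_empty]
    · exact hK n hn
  refine hb.isInverseInvariantSeq_of_two_mul_succ (IsRegular.of_ne_zero two_ne_zero).left hK0
    fun n ↦ ?_
  rw [hK' (n + 1), hK' n, two_mul_sum_one_half_pow_mul_succ]

end DivisionRing

/-- the sequence `K` built from the Bernoulli numbers (convention
`B 1 = -1/2`, Mathlib's `bernoulli`) via `K 0 = 0`,
`K n = ∑_{k<n} (1/2)^(n-k) (-1)^k B k`, is an inverse invariant sequence of the
first kind. -/
theorem stmt14 (K : ℕ → ℝ) (hK0 : K 0 = 0)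
    (hK : ∀ n, 1 ≤ n →
      K n = ∑ k ∈ Finset.range n, (1 / 2 : ℝ) ^ (n - k) * (-1) ^ k * (bernoulli k : ℝ)) :
    ∀ n, ∑ k ∈ Finset.range (n + 1), (Nat.choose n k : ℝ) * (-1) ^ k * K k = -K n :=
  stmt14_general isInvariantSeq_neg_one_pow_mul_bernoulli hK0 fun n hn ↦ by
    simpa only [mul_assoc] using hK n hn
end
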